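/- arXiv:1001.1384 — 4 statements merged into one kernel-verified Lean document; each statement's English description precedes it below -/
import Mathlib

section
/- For any natural number m ≥ 1 and positive semidefinite n×n matrices T and A, Tr[(T^{1/m} A)^m] ≤ Tr[T A^m]. -/
namespace LTaux

open Matrix ComplexOrder ComplexConjugate

/-- Entire functions bounded on the closed strip. -/
def Good (f : ℂ → ℂ) : Prop :=
  Differentiable ℂ f ∧ ∃ C : ℝ, ∀ z : ℂ, 0 ≤ z.re → z.re ≤ 1 → ‖f z‖ ≤ C

lemma Good.const (c : ℂ) : Good (fun _ => c) :=
  ⟨differentiable_const c, ‖c‖, fun _ _ _ => le_rfl⟩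

lemma Good.add {f g : ℂ → ℂ} (hf : Good f) (hg : Good g) : Good (fun z => f z + g z) := by
  obtain ⟨hf, C, hC⟩ := hf
  obtain ⟨hg, D, hD⟩ := hg
  exact ⟨hf.add hg, C + D, fun z h0 h1 =>
    (norm_add_le _ _).trans (add_le_add (hC z h0 h1) (hD z h0 h1))⟩

lemma Good.mul {f g : ℂ → ℂ} (hf : Good f) (hg : Good g) : Good (fun z => f z * g z) := by
  obtain ⟨hf, C, hC⟩ := hf
  obtain ⟨hg, D, hD⟩ := hg
  refine ⟨hf.mul hg, C * D, fun z h0 h1 => ?_⟩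
  rw [norm_mul]
  exact mul_le_mul (hC z h0 h1) (hD z h0 h1) (norm_nonneg _)
    ((norm_nonneg _).trans (hC z h0 h1))

lemma Good.sum {ι : Type*} (s : Finset ι) {f : ι → ℂ → ℂ} (hf : ∀ i, Good (f i)) :
    Good (fun z => ∑ i ∈ s, f i z) := by
  classical
  induction s using Finset.induction_on with
  | empty => simpa using Good.const 0
  | insert a s ha ih =>
    simp only [Finset.sum_insert ha]
    exact (hf a).add ih

lemma Good.exp (p q l : ℝ) : Good (fun z => Complex.exp ((p * z + q) * l)) := by
  refine ⟨by fun_prop, Real.exp ((|p| + |q|) * |l|), fun z h0 h1 => ?_⟩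
  rw [Complex.norm_exp]
  apply Real.exp_le_exp.mpr
  have : (((p : ℂ) * z + q) * l).re = (p * z.re + q) * l := by simp
  rw [this]
  refine (le_abs_self _).trans ?_
  rw [abs_mul]
  refine mul_le_mul_of_nonneg_right ?_ (abs_nonneg _)
  refine (abs_add_le _ _).trans ?_
  rw [abs_mul, abs_of_nonneg h0]
  nlinarith [abs_nonneg p]

variable {n : ℕ}

/-- Matrix functions with good entries. -/
def GoodM (F : ℂ → Matrix (Fin n) (Fin n) ℂ) : Prop := ∀ i j, Good (fun z => F z i j)

lemma GoodM.const (M : Matrix (Fin n) (Fin n) ℂ) : GoodM (fun _ => M) :=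
  fun _ _ => Good.const _

lemma GoodM.mul {F G : ℂ → Matrix (Fin n) (Fin n) ℂ} (hF : GoodM F) (hG : GoodM G) :
    GoodM (fun z => F z * G z) := by
  intro i j
  simp only [Matrix.mul_apply]
  exact Good.sum _ fun k => (hF i k).mul (hG k j)

lemma GoodM.trace {F : ℂ → Matrix (Fin n) (Fin n) ℂ} (hF : GoodM F) :
    Good (fun z => Matrix.trace (F z)) := by
  simp only [Matrix.trace, Matrix.diag]
  exact Good.sum _ fun k => hF k k

lemma exists_powers (A : Matrix (Fin n) (Fin n) ℂ) (hA : A.PosDef) :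
    ∃ E : ℂ → Matrix (Fin n) (Fin n) ℂ, E 1 = A ∧ E 0 = 1 ∧ (∀ z w, E (z + w) = E z * E w) ∧
      (∀ z, (E z)ᴴ = E (conj z)) ∧ ∀ p q : ℝ, GoodM (fun z => E (p * z + q)) := by
  let U : Matrix (Fin n) (Fin n) ℂ := hA.1.eigenvectorUnitary
  have hU : Uᴴ * U = 1 := by
    have := Unitary.star_mul_self_of_mem hA.1.eigenvectorUnitary.2
    rwa [star_eq_conjTranspose] at this
  have hU' : U * Uᴴ = 1 := mul_eq_one_comm.mp hU
  let l : Fin n → ℝ := fun i => Real.log (hA.1.eigenvalues i)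
  refine ⟨fun z => U * diagonal (fun i => Complex.exp (z * l i)) * Uᴴ, ?_, ?_, ?_, ?_, ?_⟩
  · conv_rhs => rw [hA.1.spectral_theorem, Unitary.conjStarAlgAut_apply]
    have : (fun i => Complex.exp (1 * l i)) = (RCLike.ofReal ∘ hA.1.eigenvalues : Fin n → ℂ) := by
      funext i
      simp only [l, one_mul, Function.comp]
      rw [← Complex.ofReal_exp, Real.exp_log (hA.eigenvalues_pos i)]
      rfl
    change U * diagonal (fun i => Complex.exp (1 * l i)) * Uᴴ = _
    rw [this]
    rfl
  · simp [hU']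
  · intro z w
    have : U * diagonal (fun i => Complex.exp (z * l i)) * Uᴴ *
        (U * diagonal (fun i => Complex.exp (w * l i)) * Uᴴ) =
        U * diagonal (fun i => Complex.exp (z * l i)) * (Uᴴ * U) *
        diagonal (fun i => Complex.exp (w * l i)) * Uᴴ := by simp only [Matrix.mul_assoc]
    simp only [this, hU, Matrix.mul_one]
    rw [Matrix.mul_assoc U (diagonal _) (diagonal _), diagonal_mul_diagonal]
    simp only [add_mul, Complex.exp_add]
  · intro z
    simp only [conjTranspose_mul, conjTranspose_conjTranspose, diagonal_conjTranspose,
      Matrix.mul_assoc]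
    congr 3
    funext i
    simp [← Complex.exp_conj]
  · intro p q
    refine ((GoodM.const U).mul ?_).mul (GoodM.const Uᴴ)
    intro i j
    by_cases h : i = j
    · subst h
      simpa using Good.exp p q (l i)
    · simpa [diagonal_apply_ne _ h] using Good.const 0

/-- Squared Frobenius norm. -/
noncomputable def fr (P : Matrix (Fin n) (Fin n) ℂ) : ℝ := (trace (Pᴴ * P)).re

lemma fr_eq (P : Matrix (Fin n) (Fin n) ℂ) : fr P = ∑ x : Fin n × Fin n, ‖P x.1 x.2‖ ^ 2 := by
  rw [fr, Fintype.sum_prod_type_right]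
  simp only [trace, diag, mul_apply, conjTranspose_apply, Complex.re_sum]
  refine Finset.sum_congr rfl fun i _ => Finset.sum_congr rfl fun j _ => ?_
  rw [← Complex.normSq_eq_norm_sq, Complex.normSq_apply]
  simp

lemma fr_nonneg (P : Matrix (Fin n) (Fin n) ℂ) : 0 ≤ fr P := by
  rw [fr_eq]; positivity

lemma norm_trace_le (P Q : Matrix (Fin n) (Fin n) ℂ) :
    ‖trace (P * Q)‖ ≤ √(fr P) * √(fr Q) := by
  have h1 : ‖trace (P * Q)‖ ≤ ∑ x : Fin n × Fin n, ‖P x.1 x.2‖ * ‖Q x.2 x.1‖ := by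
    rw [Fintype.sum_prod_type]
    simp only [trace, diag, mul_apply]
    refine (norm_sum_le _ _).trans (Finset.sum_le_sum fun i _ => ?_)
    refine (norm_sum_le _ _).trans (Finset.sum_le_sum fun j _ => ?_)
    rw [norm_mul]
  refine h1.trans ?_
  have h2 := Real.sum_mul_le_sqrt_mul_sqrt Finset.univ
    (fun x : Fin n × Fin n => ‖P x.1 x.2‖) (fun x => ‖Q x.2 x.1‖)
  have h3 : ∑ x : Fin n × Fin n, ‖Q x.2 x.1‖ ^ 2 = fr Q := by
    rw [fr_eq]
    exact Fintype.sum_equiv (Equiv.prodComm _ _) _ _ fun x => rfl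
  rwa [h3, ← fr_eq] at h2

lemma fr_left (U P : Matrix (Fin n) (Fin n) ℂ) (hU : Uᴴ * U = 1) : fr (U * P) = fr P := by
  rw [fr, fr, conjTranspose_mul, Matrix.mul_assoc, ← Matrix.mul_assoc Uᴴ, hU, Matrix.one_mul]

lemma fr_right (U P : Matrix (Fin n) (Fin n) ℂ) (hU : Uᴴ * U = 1) : fr (P * U) = fr P := by
  rw [fr, fr, conjTranspose_mul, ← Matrix.mul_assoc, trace_mul_comm, Matrix.mul_assoc Uᴴ,
    ← Matrix.mul_assoc, mul_eq_one_comm.mp hU, Matrix.one_mul]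

lemma iso_mul {U V : Matrix (Fin n) (Fin n) ℂ} (hU : Uᴴ * U = 1) (hV : Vᴴ * V = 1) :
    (U * V)ᴴ * (U * V) = 1 := by
  rw [conjTranspose_mul, Matrix.mul_assoc, ← Matrix.mul_assoc Uᴴ, hU, Matrix.one_mul, hV]

lemma trace_pow_comm (C D : Matrix (Fin n) (Fin n) ℂ) (m : ℕ) :
    trace ((C * D) ^ m) = trace ((D * C) ^ m) := by
  cases m with
  | zero => simp
  | succ k =>
    have h : ∀ k, (C * D) ^ k * C = C * (D * C) ^ k := by
      intro k
      induction k with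
      | zero => simp
      | succ k ih =>
        rw [pow_succ, pow_succ]
        calc (C * D) ^ k * (C * D) * C = ((C * D) ^ k * C) * (D * C) := by
              simp only [Matrix.mul_assoc]
          _ = C * ((D * C) ^ k * (D * C)) := by rw [ih, Matrix.mul_assoc]
    rw [pow_succ, ← Matrix.mul_assoc, h, Matrix.mul_assoc, trace_mul_comm, Matrix.mul_assoc,
      ← pow_succ]

lemma real_final {S R : ℝ} (hS : 0 ≤ S) (hR : 0 ≤ R) {m : ℕ} (hm : 1 ≤ m)
    (h : S ≤ S ^ (1 - (m : ℝ)⁻¹) * (√R * √S) ^ ((m : ℝ)⁻¹)) : S ≤ R := by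
  rcases hS.eq_or_lt with h0 | h0
  · rw [← h0]; exact hR
  have hm0 : (0 : ℝ) < (m : ℝ)⁻¹ := by positivity
  rw [Real.rpow_sub h0, Real.rpow_one] at h
  have h1 : S ^ ((m : ℝ)⁻¹) ≤ (√R * √S) ^ ((m : ℝ)⁻¹) := by
    have hp : 0 < S ^ ((m : ℝ)⁻¹) := Real.rpow_pos_of_pos h0 _
    rw [div_mul_eq_mul_div, le_div_iff₀ hp] at h
    exact le_of_mul_le_mul_left h h0
  have h2 : S ≤ √R * √S := (Real.rpow_le_rpow_iff hS (by positivity) hm0).mp h1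
  have h3 : √S ≤ √R := by
    have hp : 0 < √S := Real.sqrt_pos.mpr h0
    refine le_of_mul_le_mul_right ?_ hp
    rwa [Real.mul_self_sqrt hS]
  exact (Real.sqrt_le_sqrt_iff hR).mp h3

lemma three_lines {f : ℂ → ℂ} (hf : Good f) {a b : ℝ} (ha : ∀ z : ℂ, z.re = 0 → ‖f z‖ ≤ a)
    (hb : ∀ z : ℂ, z.re = 1 → ‖f z‖ ≤ b) (t : ℝ) (h0 : 0 ≤ t) (h1 : t ≤ 1) :
    ‖f t‖ ≤ a ^ (1 - t) * b ^ t := by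
  have := Complex.HadamardThreeLines.norm_le_interp_of_mem_verticalClosedStrip₀₁' f (z := (t : ℂ))
    (a := a) (b := b) (by simp [Complex.HadamardThreeLines.verticalClosedStrip, h0, h1])
    hf.1.diffContOnCl ?_ (fun z hz => ha z (by simpa using hz)) (fun z hz => hb z (by simpa using hz))
  · simpa using this
  · obtain ⟨C, hC⟩ := hf.2
    refine ⟨C, ?_⟩
    rintro _ ⟨z, hz, rfl⟩
    exact hC z hz.1 hz.2

lemma posDef_case {m : ℕ} (hm : 1 ≤ m) (A B : Matrix (Fin n) (Fin n) ℂ)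
    (hA : A.PosDef) (hB : B.PosDef) :
    (trace ((B * A) ^ m)).re ≤ (trace (B ^ m * A ^ m)).re := by
  obtain ⟨EA, A1, A0, Aadd, Aconj, Agood⟩ := exists_powers A hA
  obtain ⟨EB, B1, B0, Badd, Bconj, Bgood⟩ := exists_powers B hB
  have key : ∀ E : ℂ → Matrix (Fin n) (Fin n) ℂ, E 0 = 1 → (∀ z w, E (z + w) = E z * E w) →
      ∀ k : ℕ, E k = E 1 ^ k := by
    intro E h0 ha k
    induction k with
    | zero => simpa using h0
    | succ k ih => rw [Nat.cast_succ, ha, ih, pow_succ]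
  have iso : ∀ E : ℂ → Matrix (Fin n) (Fin n) ℂ, E 0 = 1 → (∀ z w, E (z + w) = E z * E w) →
      (∀ z, (E z)ᴴ = E (conj z)) → ∀ v : ℂ, v.re = 0 → (E v)ᴴ * E v = 1 := by
    intro E h0 ha hc v hv
    rw [hc, ← ha, ← h0]
    congr 1
    apply Complex.ext <;> simp [hv]
  have hconjhalf : conj (1 / 2 : ℂ) = 1 / 2 := by
    apply Complex.ext <;> simp
  have hAh : EA (1 / 2) * EA (1 / 2) = A := by rw [← Aadd, ← A1]; norm_num
  have hBh : EB (1 / 2) * EB (1 / 2) = B := by rw [← Badd, ← B1]; norm_num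
  let C := EA (1 / 2) * EB (1 / 2)
  have hCinv : (EB (-(1 / 2)) * EA (-(1 / 2))) * C = 1 := by
    simp only [C]
    rw [Matrix.mul_assoc, ← Matrix.mul_assoc (EA _), ← Aadd, neg_add_cancel, A0, Matrix.one_mul,
      ← Badd, neg_add_cancel, B0]
  have hCC : Cᴴ * C = EB (1 / 2) * A * EB (1 / 2) := by
    simp only [C]
    rw [conjTranspose_mul, Aconj, Bconj, hconjhalf, ← hAh]
    simp only [Matrix.mul_assoc]
  have hX : (Cᴴ * C).PosDef := by
    apply PosDef.conjTranspose_mul_self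
    intro x y hxy
    have := congrArg (fun v => (EB (-(1 / 2)) * EA (-(1 / 2))) *ᵥ v) hxy
    simpa only [mulVec_mulVec, hCinv, one_mulVec] using this
  obtain ⟨EX, X1, X0, Xadd, Xconj, Xgood⟩ := exists_powers _ hX
  let G := EX (-(1 / 2)) * EB (1 / 2) * EA (1 / 2)
  have hGC : G = EX (-(1 / 2)) * Cᴴ := by
    simp only [G, C]
    rw [conjTranspose_mul, Aconj, Bconj, hconjhalf, Matrix.mul_assoc]
  have hG : Gᴴ * G = 1 := by
    rw [mul_eq_one_comm, hGC, conjTranspose_mul (EX _) Cᴴ, conjTranspose_conjTranspose, Xconj,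
      map_neg, hconjhalf, Matrix.mul_assoc, ← Matrix.mul_assoc Cᴴ, ← X1, ← Xadd, ← Xadd, ← X0]
    norm_num
  let f : ℂ → ℂ := fun z => trace (G * EA ((m / 2 : ℝ) * z + (0 : ℝ)) *
    EB ((m / 2 : ℝ) * z + (0 : ℝ)) * EX ((-(m / 2) : ℝ) * z + (m : ℝ)))
  have hf : Good f := by
    refine GoodM.trace ?_
    exact (((GoodM.const G).mul (Agood _ _)).mul (Bgood _ _)).mul (Xgood _ _)
  have hconjm : conj ((m : ℂ) / 2) = m / 2 := by
    rw [div_eq_mul_one_div, map_mul, hconjhalf, Complex.conj_natCast]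
  have hfrX : fr (EX (m / 2)) = (trace (EX m)).re := by
    rw [fr, Xconj, ← Xadd]
    rw [hconjm, add_halves]
  have hfrAB : fr (EA (m / 2) * EB (m / 2)) = (trace (B ^ m * A ^ m)).re := by
    have hA2 : EA (m / 2) * EA (m / 2) = A ^ m := by
      rw [← Aadd, ← A1, ← key EA A0 Aadd, add_halves]
    have hB2 : EB (m / 2) * EB (m / 2) = B ^ m := by
      rw [← Badd, ← B1, ← key EB B0 Badd, add_halves]
    rw [fr, conjTranspose_mul, Aconj, Bconj, hconjm, ← Matrix.mul_assoc, trace_mul_comm,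
      ← Matrix.mul_assoc, ← Matrix.mul_assoc, hB2, Matrix.mul_assoc, hA2]
  have ha : ∀ z : ℂ, z.re = 0 → ‖f z‖ ≤ (trace (EX m)).re := by
    intro z hz
    let v : ℂ := m / 2 * z
    have hv : v.re = 0 := by simp [v, hz]
    have hv' : (-v).re = 0 := by simp [hv]
    have e : f z = trace (((G * EA v * EB v * EX (-v)) * EX (m / 2)) * EX (m / 2)) := by
      simp only [f]
      rw [Matrix.mul_assoc _ (EX _) (EX _), Matrix.mul_assoc _ (EX _) (_ * _), ← Xadd, ← Xadd]
      have a1 : ((m / 2 : ℝ) : ℂ) * z + ((0 : ℝ) : ℂ) = v := by simp [v]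
      have a2 : ((-(m / 2) : ℝ) : ℂ) * z + ((m : ℝ) : ℂ) = -v + (m / 2 + m / 2) := by
        simp only [v]; push_cast; ring
      rw [a1, a2]
    rw [e]
    refine (norm_trace_le _ _).trans ?_
    rw [fr_left, hfrX, Real.mul_self_sqrt]
    · rw [← hfrX]; exact fr_nonneg _
    · exact iso_mul (iso_mul (iso_mul hG (iso EA A0 Aadd Aconj v hv)) (iso EB B0 Badd Bconj v hv))
        (iso EX X0 Xadd Xconj _ hv')
  have hb : ∀ z : ℂ, z.re = 1 → ‖f z‖ ≤ √((trace (B ^ m * A ^ m)).re) * √((trace (EX m)).re) := by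
    intro z hz
    let v : ℂ := m / 2 * (z - 1)
    have hv : v.re = 0 := by simp [v, hz]
    have hv' : (-v).re = 0 := by simp [hv]
    have e : f z = trace (((G * EA v) * ((EA (m / 2) * EB (m / 2)) * (EB v * EX (-v)))) *
        EX (m / 2)) := by
      have e1 : ((G * EA v) * ((EA (m / 2) * EB (m / 2)) * (EB v * EX (-v)))) * EX (m / 2)
        = G * (EA v * EA (m / 2)) * (EB (m / 2) * EB v) * (EX (-v) * EX (m / 2)) := by
        simp only [Matrix.mul_assoc]
      rw [e1, ← Aadd, ← Badd, ← Xadd]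
      simp only [f]
      have a1 : ((m / 2 : ℝ) : ℂ) * z + ((0 : ℝ) : ℂ) = v + m / 2 := by
        simp only [v]; push_cast; ring
      have a2 : ((-(m / 2) : ℝ) : ℂ) * z + ((m : ℝ) : ℂ) = -v + m / 2 := by
        simp only [v]; push_cast; ring
      rw [a1, a2, add_comm (m / 2 : ℂ) v]
    rw [e]
    refine (norm_trace_le _ _).trans ?_
    rw [fr_left _ _ (iso_mul hG (iso EA A0 Aadd Aconj v hv)), fr_right _ _
      (iso_mul (iso EB B0 Badd Bconj v hv) (iso EX X0 Xadd Xconj _ hv')), hfrX, hfrAB]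
  have hmpos : (1 : ℝ) ≤ m := by exact_mod_cast hm
  have hmne : (m : ℂ) ≠ 0 := by exact_mod_cast (by omega : m ≠ 0)
  have h3 := three_lines hf ha hb (m : ℝ)⁻¹ (by positivity) (inv_le_one_of_one_le₀ hmpos)
  have hft : f ((m : ℝ)⁻¹ : ℝ) = trace (EX m) := by
    have a1 : (((m / 2 : ℝ) : ℂ) * (((m : ℝ)⁻¹ : ℝ) : ℂ) + ((0 : ℝ) : ℂ)) = 1 / 2 := by
      push_cast; field_simp; simp
    have a2 : (((-(m / 2) : ℝ) : ℂ) * (((m : ℝ)⁻¹ : ℝ) : ℂ) + ((m : ℝ) : ℂ)) = -(1 / 2) + m := by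
      push_cast; field_simp
    simp only [f]
    rw [a1, a2, Matrix.mul_assoc G, hGC]
    change trace (EX (-(1 / 2)) * Cᴴ * C * _) = _
    rw [Matrix.mul_assoc (EX _) Cᴴ C, ← X1, ← Xadd, ← Xadd]
    congr 2; ring
  have hS : trace ((B * A) ^ m) = trace (EX m) := by
    rw [key EX X0 Xadd, X1, hCC, Matrix.mul_assoc, ← hBh, Matrix.mul_assoc (EB _) (EB _) A,
      trace_pow_comm, Matrix.mul_assoc, trace_pow_comm, Matrix.mul_assoc]
  rw [hS]
  refine real_final ?_ ?_ hm ?_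
  · rw [← hfrX]; exact fr_nonneg _
  · rw [← hfrAB]; exact fr_nonneg _
  · rw [hft] at h3
    exact (Complex.re_le_norm _).trans h3

lemma posSemidef_case {m : ℕ} (hm : 1 ≤ m) (A B : Matrix (Fin n) (Fin n) ℂ)
    (hA : A.PosSemidef) (hB : B.PosSemidef) :
    (trace ((B * A) ^ m)).re ≤ (trace (B ^ m * A ^ m)).re := by
  have hpd : ∀ M : Matrix (Fin n) (Fin n) ℂ, M.PosSemidef → ∀ e : ℝ, 0 < e →
      (M + (e : ℂ) • (1 : Matrix (Fin n) (Fin n) ℂ)).PosDef := by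
    intro M hM e he
    refine PosDef.posSemidef_add hM ?_
    exact PosDef.one.smul (by exact_mod_cast he)
  have hc1 : Continuous (fun e : ℝ => (trace (((B + (e : ℂ) • (1 : Matrix (Fin n) (Fin n) ℂ)) *
      (A + (e : ℂ) • (1 : Matrix (Fin n) (Fin n) ℂ))) ^ m)).re) := by
    fun_prop
  have hc2 : Continuous (fun e : ℝ => (trace ((B + (e : ℂ) • (1 : Matrix (Fin n) (Fin n) ℂ)) ^ m *
      (A + (e : ℂ) • (1 : Matrix (Fin n) (Fin n) ℂ)) ^ m)).re) := by
    fun_prop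
  have t1 := (hc1.tendsto 0).mono_left (nhdsWithin_le_nhds (s := Set.Ioi 0))
  have t2 := (hc2.tendsto 0).mono_left (nhdsWithin_le_nhds (s := Set.Ioi 0))
  have := le_of_tendsto_of_tendsto t1 t2 (by
    filter_upwards [self_mem_nhdsWithin] with e he
    exact posDef_case hm _ _ (hpd A hA e he) (hpd B hB e he))
  simpa using this

lemma trace_im_zero {M : Matrix (Fin n) (Fin n) ℂ} (h : trace Mᴴ = trace M) :
    (trace M).im = 0 := by
  rw [trace_conjTranspose] at h
  exact Complex.conj_eq_iff_im.mp h

end LTaux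

open Matrix ComplexOrder in
theorem trace_rootPow_mul_pow_le {n m : ℕ} (hm : 1 ≤ m)
    (T A : Matrix (Fin n) (Fin n) ℂ) (hT : T.PosSemidef) (hA : A.PosSemidef) :
    trace ((hT.1.cfc (fun x : ℝ => x ^ ((m : ℝ)⁻¹)) * A) ^ m) ≤ trace (T * A ^ m) := by
  set B := hT.1.cfc (fun x : ℝ => x ^ ((m : ℝ)⁻¹)) with hBdef
  have hBm : B ^ m = T := by
    conv_rhs => rw [hT.1.spectral_theorem]
    rw [hBdef, IsHermitian.cfc, ← map_pow, diagonal_pow]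
    congr 2
    funext i
    simp only [Pi.pow_apply, Function.comp]
    rw [← map_pow, ← Real.rpow_natCast, ← Real.rpow_mul (hT.eigenvalues_nonneg i),
      inv_mul_cancel₀ (by positivity), Real.rpow_one]
  have hB : B.PosSemidef := by
    rw [hBdef, IsHermitian.cfc, Unitary.conjStarAlgAut_apply, star_eq_conjTranspose]
    refine PosSemidef.mul_mul_conjTranspose_same ?_ _
    refine PosSemidef.diagonal fun i => ?_
    have : 0 ≤ (hT.1.eigenvalues i) ^ ((m : ℝ)⁻¹) := Real.rpow_nonneg (hT.eigenvalues_nonneg i) _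
    simpa using this
  rw [Complex.le_def]
  have hAH : Aᴴ = A := hA.1
  have hBH : Bᴴ = B := hB.1
  have hTH : Tᴴ = T := hT.1
  constructor
  · have := LTaux.posSemidef_case hm A B hA hB
    rwa [hBm] at this
  · rw [LTaux.trace_im_zero, LTaux.trace_im_zero]
    · rw [conjTranspose_mul, conjTranspose_pow, hAH, hTH, trace_mul_comm]
    · rw [conjTranspose_pow, conjTranspose_mul, hAH, hBH, LTaux.trace_pow_comm]
end

section
/- Let T be an invertible positive definite 2×2 matrix, A a positive semidefinite 2×2 matrix with Tr[T A²] > 0, and p₁,…,p_m positive reals summing to 1 with not all p_i equal to 1/m or with T having distinct eigenvalues. If Tr[T^{p₁} A T^{p₂} A ⋯ T^{p_m} A] = Tr[T A^m] and this trace is nonzero, and the eigenvalues of T are distinct, then T is a scalar multiple of the identity — i.e., equality Tr[T^{p₁}A⋯T^{p_m}A] = Tr[TA^m] (with A having a nonzero off-diagonal matrix element in the eigenbasis of T) forces T = kI. -/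
section
open Matrix

noncomputable def eqcW {m : ℕ} (B : Matrix (Fin 2) (Fin 2) ℝ) (s : Fin m → Fin 2) : ℝ :=
  trace (List.ofFn (fun i => diagonal (Pi.single (s i) (1:ℝ)) * B)).prod

lemma eqc_expand {m : ℕ} (B : Matrix (Fin 2) (Fin 2) ℝ) (c : Fin m → Fin 2 → ℝ) :
    trace (List.ofFn (fun i => diagonal (c i) * B)).prod
      = ∑ s : Fin m → Fin 2, (∏ i, c i (s i)) * eqcW B s := by
  have h1 : ∀ i, diagonal (c i) * B
      = ∑ j, c i j • (diagonal (Pi.single j (1:ℝ)) * B) := by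
    intro i
    ext k l
    fin_cases k <;> simp [Fin.sum_univ_two, diagonal_mul]
  simp_rw [h1]
  have h2 := (MultilinearMap.mkPiAlgebraFin ℝ m (Matrix (Fin 2) (Fin 2) ℝ)).map_sum
    (fun i j => c i j • (diagonal (Pi.single j (1:ℝ)) * B))
  have h3 := fun s : Fin m → Fin 2 =>
    (MultilinearMap.mkPiAlgebraFin ℝ m (Matrix (Fin 2) (Fin 2) ℝ)).map_smul_univ
    (fun i => c i (s i)) (fun i => (diagonal (Pi.single (s i) (1:ℝ)) * B))
  simp only [MultilinearMap.mkPiAlgebraFin_apply] at h2 h3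
  rw [h2, trace_sum]
  refine Finset.sum_congr rfl fun s _ => ?_
  rw [h3, trace_smul, smul_eq_mul, eqcW]

lemma eqc_listprod_nonneg (l : List (Matrix (Fin 2) (Fin 2) ℝ))
    (h : ∀ M ∈ l, ∀ i j, 0 ≤ M i j) : ∀ i j, 0 ≤ l.prod i j := by
  induction l with
  | nil => intro i j; simp only [List.prod_nil, one_apply]; split_ifs <;> norm_num
  | cons M l ih =>
    intro i j
    rw [List.prod_cons, mul_apply]
    exact Finset.sum_nonneg fun k _ => mul_nonneg (h M (by simp) i k)
      (ih (fun N hN => h N (by simp [hN])) k j)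

lemma eqcW_nonneg {m : ℕ} (B : Matrix (Fin 2) (Fin 2) ℝ) (hB : ∀ i j, 0 ≤ B i j)
    (s : Fin m → Fin 2) : 0 ≤ eqcW B s := by
  unfold eqcW trace
  refine Finset.sum_nonneg fun k _ => eqc_listprod_nonneg _ ?_ k k
  intro M hM i j
  obtain ⟨t, rfl⟩ := (List.mem_ofFn' _ _).1 hM
  show 0 ≤ (diagonal (Pi.single (s t) (1:ℝ)) * B) i j
  rw [diagonal_mul]
  refine mul_nonneg ?_ (hB i j)
  by_cases h : i = s t
  · subst h; simp
  · simp [Pi.single_apply, h]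

lemma eqc_pow (B : Matrix (Fin 2) (Fin 2) ℝ) (n : ℕ) :
    (diagonal (Pi.single (1 : Fin 2) (1:ℝ)) * B) ^ (n+1)
      = B 1 1 ^ n • (diagonal (Pi.single (1 : Fin 2) (1:ℝ)) * B) := by
  induction n with
  | zero => simp
  | succ n ih =>
    rw [pow_succ, ih, smul_mul_assoc, pow_succ, mul_smul]
    congr 1
    ext i j
    fin_cases i <;> simp [mul_apply, Fin.sum_univ_two, diagonal]

lemma eqcW_pos {n : ℕ} (B : Matrix (Fin 2) (Fin 2) ℝ)
    (h01 : 0 < B 0 1) (h10 : 0 < B 1 0) (h11 : 0 < B 1 1) :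
    0 < eqcW B (Fin.cons 0 (fun _ => 1) : Fin (n+2) → Fin 2) := by
  rw [eqcW, List.ofFn_succ]
  simp only [Fin.cons_zero, Fin.cons_succ, List.prod_cons, List.ofFn_const, List.prod_replicate]
  rw [eqc_pow]
  simp [trace, Fin.sum_univ_two, mul_apply, diagonal]
  positivity

lemma eqc_single {m : ℕ} (B : Matrix (Fin 2) (Fin 2) ℝ) (d : Fin 2 → ℝ) (i : Fin m) :
    ∑ s : Fin m → Fin 2, d (s i) * eqcW B s = trace (diagonal d * B ^ m) := by
  have h := eqc_expand B (Function.update (fun _ _ => (1:ℝ)) i d)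
  have h1 : ∀ s : Fin m → Fin 2,
      ∏ k, (Function.update (fun _ _ => (1:ℝ)) i d : Fin m → Fin 2 → ℝ) k (s k) = d (s i) := by
    intro s
    rw [Finset.prod_eq_single i]
    · simp
    · intro b _ hb; simp [Function.update_of_ne hb]
    · simp
  simp_rw [h1] at h
  rw [← h]
  have h2 : List.ofFn (fun k => diagonal ((Function.update (fun _ _ => (1:ℝ)) i d : Fin m → Fin 2 → ℝ) k) * B)
      = (List.replicate m B).set i (diagonal d * B) := by
    apply List.ext_getElem
    · simp
    · intro k h1 h2
      simp only [List.length_ofFn] at h1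
      simp only [List.getElem_ofFn, List.getElem_set, List.getElem_replicate]
      split_ifs with hk
      · have : (⟨k, h1⟩ : Fin m) = i := Fin.ext hk.symm
        rw [this]; simp
      · rw [Function.update_of_ne (fun h => hk (by rw [← h]))]
        have : (diagonal fun _ => (1:ℝ) : Matrix (Fin 2) (Fin 2) ℝ) = 1 := diagonal_one
        rw [this, one_mul]
  rw [h2, List.prod_set]
  simp only [List.length_replicate, i.2, if_true, List.take_replicate, List.drop_replicate,
    List.prod_replicate]
  rw [trace_mul_comm, ← mul_assoc, ← pow_add, trace_mul_comm, mul_assoc, ← pow_succ']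
  congr 3
  omega

lemma eqc_real {m : ℕ} (hm : 2 ≤ m) (B : Matrix (Fin 2) (Fin 2) ℝ) (hB : ∀ i j, 0 ≤ B i j)
    (h01 : 0 < B 0 1) (h10 : 0 < B 1 0) (h11 : 0 < B 1 1)
    (p : Fin m → ℝ) (hp : ∀ i, 0 < p i) (hsum : ∑ i, p i = 1)
    (d : Fin 2 → ℝ) (hd : ∀ j, 0 < d j) (hne : d 0 ≠ d 1) :
    trace (List.ofFn (fun i => diagonal (fun j => d j ^ p i) * B)).prod
      < trace (diagonal d * B ^ m) := by
  rw [eqc_expand]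
  have h1 : trace (diagonal d * B ^ m)
      = ∑ s : Fin m → Fin 2, (∑ i, p i * d (s i)) * eqcW B s := by
    simp_rw [Finset.sum_mul]
    rw [Finset.sum_comm]
    simp_rw [mul_assoc, ← Finset.mul_sum, eqc_single]
    rw [← Finset.sum_mul, hsum, one_mul]
  rw [h1]
  obtain ⟨n, rfl⟩ : ∃ n, m = n + 2 := ⟨m - 2, by omega⟩
  refine Finset.sum_lt_sum (fun s _ => ?_) ⟨Fin.cons 0 (fun _ => 1), Finset.mem_univ _, ?_⟩
  · exact mul_le_mul_of_nonneg_right (Real.geom_mean_le_arith_mean_weighted _ _ _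
      (fun i _ => (hp i).le) hsum (fun i _ => (hd _).le)) (eqcW_nonneg B hB s)
  · refine mul_lt_mul_of_pos_right ?_ (eqcW_pos B h01 h10 h11)
    rw [Real.geom_mean_lt_arith_mean_weighted_iff_of_pos _ _ _
      (fun i _ => hp i) hsum (fun i _ => (hd _).le)]
    exact ⟨0, Finset.mem_univ _, 1, Finset.mem_univ _, by simpa using hne⟩

lemma eqc_list_conj (Q R : Matrix (Fin 2) (Fin 2) ℂ) (h1 : R * Q = 1) (h2 : Q * R = 1)
    (l : List (Matrix (Fin 2) (Fin 2) ℂ)) :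
    (l.map (fun X => Q * X * R)).prod = Q * l.prod * R := by
  induction l with
  | nil => simp [h2]
  | cons X l ih =>
    rw [List.map_cons, List.prod_cons, ih, List.prod_cons]
    calc Q * X * R * (Q * l.prod * R) = Q * X * (R * Q) * l.prod * R := by
          simp only [mul_assoc]
      _ = _ := by rw [h1, mul_one]; simp only [mul_assoc]

lemma eqc_list_ofReal (l : List (Matrix (Fin 2) (Fin 2) ℝ)) :
    (l.map (fun X => X.map Complex.ofReal)).prod = l.prod.map Complex.ofReal := by
  have := map_list_prod (Complex.ofRealHom.mapMatrix (m := Fin 2)) l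
  exact this.symm

open ComplexOrder in
/-- The equality case after a unitary change of basis. -/
lemma eqc_complex {m : ℕ} (hm : 2 ≤ m) (Q A : Matrix (Fin 2) (Fin 2) ℂ)
    (hQ : star Q * Q = 1) (hA : A.PosSemidef) (r : ℝ) (hr : 0 < r)
    (h01 : (star Q * A * Q) 0 1 = r)
    (p : Fin m → ℝ) (hp : ∀ i, 0 < p i) (hsum : ∑ i, p i = 1)
    (d : Fin 2 → ℝ) (hd : ∀ j, 0 < d j)
    (heq : trace (List.ofFn (fun i : Fin m =>
        Q * diagonal (fun j => ((d j ^ p i : ℝ) : ℂ)) * star Q * A)).prod =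
      trace (Q * diagonal (fun j => (d j : ℂ)) * star Q * A ^ m)) :
    d 0 = d 1 := by
  by_contra hne
  have hQ' : Q * star Q = 1 := mul_eq_one_comm.1 hQ
  set C := star Q * A * Q with hC
  have hCp : C.PosSemidef := by
    have := hA.conjTranspose_mul_mul_same Q
    simpa [hC, star_eq_conjTranspose] using this
  have hAC : A = Q * C * star Q := by
    rw [hC]
    calc A = (Q * star Q) * A * (Q * star Q) := by rw [hQ']; simp
      _ = _ := by simp only [mul_assoc]
  have h10 : C 1 0 = r := by
    rw [← hCp.1.apply 1 0, h01]; simp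
  have hdiag : ∀ i, 0 ≤ C i i := fun i => hCp.diag_nonneg
  have hre : ∀ i, C i i = ((C i i).re : ℂ) := fun i =>
    (Complex.eq_re_of_ofReal_le (r := 0) (by simpa using hdiag i))
  have hre0 : ∀ i, 0 ≤ (C i i).re := fun i => (Complex.le_def.1 (hdiag i)).1
  have hdet := hCp.det_nonneg
  rw [det_fin_two, h01, h10, hre 0, hre 1] at hdet
  have hdet' : 0 ≤ (C 0 0).re * (C 1 1).re - r * r := by exact_mod_cast hdet
  have h11 : 0 < (C 1 1).re := by
    rcases (hre0 1).lt_or_eq with h | h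
    · exact h
    · rw [← h] at hdet'; nlinarith
  let B : Matrix (Fin 2) (Fin 2) ℝ := C.map Complex.re
  have hB : C = B.map Complex.ofReal := by
    ext i j
    fin_cases i <;> fin_cases j
    · exact hre 0
    · simp [B, h01]
    · simp [B, h10]
    · exact hre 1
  have key := eqc_real hm B (by
      intro i j
      fin_cases i <;> fin_cases j
      · exact hre0 0
      · simp [B, h01, hr.le]
      · simp [B, h10, hr.le]
      · exact hre0 1) (by simp [B, h01, hr]) (by simp [B, h10, hr]) h11 p hp hsum d hd hne
  refine key.ne ?_
  have e1 : (List.ofFn (fun i : Fin m =>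
        Q * diagonal (fun j => ((d j ^ p i : ℝ) : ℂ)) * star Q * A)).prod
      = Q * ((List.ofFn (fun i => diagonal (fun j => d j ^ p i) * B)).prod.map Complex.ofReal)
        * star Q := by
    rw [← eqc_list_ofReal, ← eqc_list_conj Q (star Q) hQ hQ', List.map_ofFn, List.map_ofFn]
    congr 2
    funext i
    simp only [Function.comp]
    have : (diagonal (fun j => d j ^ p i) * B).map Complex.ofReal
        = diagonal (fun j => ((d j ^ p i : ℝ) : ℂ)) * C := by
      rw [hB]; ext k l; simp [diagonal_mul]
    rw [this, hC]
    calc _ = Q * diagonal (fun j => ((d j ^ p i : ℝ) : ℂ)) * star Q * A * (Q * star Q) := by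
          rw [hQ', mul_one]
      _ = _ := by simp only [mul_assoc]
  have e2 : Q * diagonal (fun j => (d j : ℂ)) * star Q * A ^ m
      = Q * ((diagonal d * B ^ m).map Complex.ofReal) * star Q := by
    have hpow : A ^ m = Q * C ^ m * star Q := by
      have := eqc_list_conj Q (star Q) hQ hQ' (List.replicate m C)
      rw [List.map_replicate, List.prod_replicate, List.prod_replicate, ← hAC] at this
      exact this
    have hBm : (B ^ m).map Complex.ofReal = C ^ m := by
      have := eqc_list_ofReal (List.replicate m B)
      rw [List.map_replicate, List.prod_replicate, List.prod_replicate, ← hB] at this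
      exact this.symm
    have : (diagonal d * B ^ m).map Complex.ofReal
        = diagonal (fun j => (d j : ℂ)) * C ^ m := by
      rw [← hBm]; ext k l; simp [diagonal_mul]
    rw [this, hpow]
    calc _ = Q * diagonal (fun j => (d j : ℂ)) * (star Q * Q) * C ^ m * star Q := by
          simp only [mul_assoc]
      _ = _ := by rw [hQ, mul_one]; simp only [mul_assoc]
  rw [e1, e2, trace_mul_comm, ← mul_assoc, hQ, one_mul, trace_mul_comm (Q * _), ← mul_assoc, hQ,
    one_mul] at heq
  simp only [trace_fin_two, map_apply] at heq ⊢
  exact_mod_cast heq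

end

open Matrix ComplexOrder in
theorem equality_case_forces_scalar {m : ℕ} (hm : 2 ≤ m)
    (T A : Matrix (Fin 2) (Fin 2) ℂ) (hT : T.PosDef) (hA : A.PosSemidef)
    (p : Fin m → ℝ) (hp : ∀ i, 0 < p i) (hsum : ∑ i, p i = 1)
    (hoff : (star (hT.1.eigenvectorUnitary : Matrix (Fin 2) (Fin 2) ℂ) * A *
        (hT.1.eigenvectorUnitary : Matrix (Fin 2) (Fin 2) ℂ)) 0 1 ≠ 0)
    (heq : trace (List.ofFn (fun i : Fin m => hT.1.cfc (fun x : ℝ => x ^ p i) * A)).prod =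
        trace (T * A ^ m)) :
    ∃ k : ℂ, T = k • (1 : Matrix (Fin 2) (Fin 2) ℂ) := by
  have hspec := hT.1.spectral_theorem
  rw [Unitary.conjStarAlgAut_apply] at hspec
  have hcfc : ∀ f : ℝ → ℝ, hT.1.cfc f = (hT.1.eigenvectorUnitary : Matrix (Fin 2) (Fin 2) ℂ) *
      diagonal (fun j => ((f (hT.1.eigenvalues j) : ℝ) : ℂ)) *
      star (hT.1.eigenvectorUnitary : Matrix (Fin 2) (Fin 2) ℂ) := fun f => rfl
  have hU : star (hT.1.eigenvectorUnitary : Matrix (Fin 2) (Fin 2) ℂ) *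
      (hT.1.eigenvectorUnitary : Matrix (Fin 2) (Fin 2) ℂ) = 1 :=
    Unitary.coe_star_mul_self _
  have hpos := hT.eigenvalues_pos
  simp_rw [hcfc] at heq
  generalize (hT.1.eigenvectorUnitary : Matrix (Fin 2) (Fin 2) ℂ) = U at *
  have hd : (RCLike.ofReal ∘ hT.1.eigenvalues : Fin 2 → ℂ)
    = fun j => ((hT.1.eigenvalues j : ℝ) : ℂ) := rfl
  rw [hd] at hspec
  generalize hT.1.eigenvalues = d at *
  have hU' : U * star U = 1 := mul_eq_one_comm.1 hU
  obtain ⟨z, hz⟩ : ∃ z, z = (star U * A * U) 0 1 := ⟨_, rfl⟩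
  rw [← hz] at hoff
  have hn : (‖z‖ : ℂ) ≠ 0 := by simpa using hoff
  have hzz : star z * z = (‖z‖ : ℂ) ^ 2 := Complex.conj_mul' z
  let D : Matrix (Fin 2) (Fin 2) ℂ := diagonal ![1, star z / ‖z‖]
  have hDs : star D = diagonal ![1, z / ‖z‖] := by
    ext i j; fin_cases i <;> fin_cases j <;> simp [D]
  have hDD : star D * D = 1 := by
    have hph : z / (‖z‖ : ℂ) * (star z / ‖z‖) = 1 := by
      field_simp
      rw [mul_comm]; exact hzz
    rw [hDs, diagonal_mul_diagonal, ← diagonal_one]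
    congr 1
    funext j
    fin_cases j
    · simp
    · exact hph
  have hDD' : D * star D = 1 := mul_eq_one_comm.1 hDD
  have hconj : ∀ c : Fin 2 → ℂ, U * D * diagonal c * star (U * D) = U * diagonal c * star U := by
    intro c
    have hc : D * diagonal c = diagonal c * D := by
      simp only [D, diagonal_mul_diagonal, mul_comm]
    calc _ = U * (D * diagonal c) * star D * star U := by
          rw [star_mul]; simp only [mul_assoc]
      _ = U * diagonal c * (D * star D) * star U := by rw [hc]; simp only [mul_assoc]
      _ = _ := by rw [hDD', mul_one]
  have h01 : (star (U * D) * A * (U * D)) 0 1 = ((‖z‖ : ℝ) : ℂ) := by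
    have : star (U * D) * A * (U * D) = star D * (star U * A * U) * D := by
      rw [star_mul]; simp only [mul_assoc]
    rw [this, hDs, mul_diagonal, diagonal_mul, ← hz]
    simp only [cons_val_zero, cons_val_one, one_mul]
    field_simp
    rw [mul_comm]; exact hzz
  have hd01 : d 0 = d 1 := by
    refine eqc_complex hm (U * D) A ?_ hA ‖z‖ (norm_pos_iff.2 hoff) h01 p hp hsum d hpos ?_
    · calc star (U * D) * (U * D) = star D * (star U * U) * D := by
            rw [star_mul]; simp only [mul_assoc]
        _ = 1 := by rw [hU, mul_one, hDD]
    · simp_rw [hconj]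
      rw [← hspec]; exact heq
  refine ⟨(d 0 : ℂ), ?_⟩
  have : (diagonal (fun j => ((d j : ℝ) : ℂ)) : Matrix (Fin 2) (Fin 2) ℂ) = (d 0 : ℂ) • 1 := by
    ext i j; fin_cases i <;> fin_cases j <;> simp [hd01]
  rw [hspec, this, mul_smul_comm, mul_one, smul_mul_assoc, hU']
end

section
/- There exist 3×3 positive semidefinite complex matrices T, A and positive reals p₁, p₂, p₃ with p₁+p₂+p₃ = 1 such that Tr[T^{p₁} A T^{p₂} A T^{p₃} A] is not a real number. -/
open Matrix ComplexOrder in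
lemma aux_cfc (S : Matrix (Fin 3) (Fin 3) ℂ) (hS : S.PosSemidef) (hT : (S ^ 6).IsHermitian)
    (r : ℝ) (k : ℕ) (hr : 6 * r = k) :
    hT.cfc (fun x : ℝ => x ^ r) = S ^ k := by
  have hsa : IsSelfAdjoint S := hS.1
  have hfin : (spectrum ℝ S).Finite := Matrix.finite_real_spectrum
  have hc : ∀ f : ℝ → ℝ, ContinuousOn f (spectrum ℝ S) := fun f => hfin.continuousOn f
  rw [← hT.cfc_eq]
  have h6 : cfc (fun x : ℝ => x ^ 6) S = S ^ 6 := cfc_pow_id S 6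
  have hcomp := cfc_comp' (fun x : ℝ => x ^ r) (fun x : ℝ => x ^ 6) S
    ((hfin.image _).continuousOn _) (hc _) hsa
  rw [← h6, ← hcomp, ← cfc_pow_id (R := ℝ) S k hsa]
  apply cfc_congr
  intro x hx
  have hx0 : 0 ≤ x := by
    rw [hS.1.spectrum_real_eq_range_eigenvalues] at hx
    obtain ⟨i, rfl⟩ := hx
    exact hS.eigenvalues_nonneg i
  simp only
  rw [← Real.rpow_natCast x 6, ← Real.rpow_mul hx0, ← Real.rpow_natCast x k]
  congr 1

open Matrix ComplexOrder in
theorem exists_nonreal_trace :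
    ∃ (T A : Matrix (Fin 3) (Fin 3) ℂ) (hT : T.PosSemidef) (_hA : A.PosSemidef)
      (p : Fin 3 → ℝ), (∀ i, 0 < p i) ∧ (∑ i, p i = 1) ∧
      (trace (hT.1.cfc (fun x : ℝ => x ^ p 0) * A * hT.1.cfc (fun x : ℝ => x ^ p 1) * A *
        hT.1.cfc (fun x : ℝ => x ^ p 2) * A)).im ≠ 0 := by
  have hS : (diagonal ![1, 2, 3] : Matrix (Fin 3) (Fin 3) ℂ).PosSemidef := by
    apply PosSemidef.diagonal
    intro i
    fin_cases i <;> simp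
  let B : Matrix (Fin 3) (Fin 3) ℂ :=
    !![2, Complex.I, Complex.I; -Complex.I, 2, Complex.I; -Complex.I, -Complex.I, 2]
  refine ⟨_, Bᴴ * B, hS.pow 6, posSemidef_conjTranspose_mul_self B, ![1/6, 1/3, 1/2], ?_, ?_, ?_⟩
  · intro i
    fin_cases i <;> simp
  · simp [Fin.sum_univ_three]; norm_num
  · rw [aux_cfc _ hS _ _ 1 (by norm_num), aux_cfc _ hS _ _ 2 (by norm_num),
      aux_cfc _ hS _ _ 3 (by simp; norm_num)]
    have hA : Bᴴ * B = !![6, 1 + 4 * Complex.I, -1 + 4 * Complex.I;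
        1 - 4 * Complex.I, 6, 1 + 4 * Complex.I;
        -1 - 4 * Complex.I, 1 - 4 * Complex.I, 6] := by
      ext i j
      fin_cases i <;> fin_cases j <;>
        simp [B, Matrix.mul_apply, Fin.sum_univ_three, Complex.ext_iff] <;> norm_num
    rw [hA]
    simp only [diagonal_pow, trace, diag_apply, Fin.sum_univ_three, Matrix.mul_apply,
      diagonal_apply]
    simp [Complex.add_im, Complex.mul_im, pow_succ]
    norm_num
end

section
/- For positive semidefinite n×n matrices X and Y, real p > 0 and 0 ≤ r ≤ 1, Tr[(Y^{r/2} X^r Y^{r/2})^p] ≤ Tr[(Y^{1/2} X Y^{1/2})^{rp}]. -/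
lemma araki_abel (n : ℕ) : ∀ (d w : Fin n → ℝ), Antitone w → (∀ i, 0 ≤ w i) →
    (∀ k : Fin n, 0 ≤ ∑ i ∈ Finset.Iic k, d i) → 0 ≤ ∑ i, w i * d i := by
  induction n with
  | zero => intro d w _ _ _; simp
  | succ n ih =>
    intro d w hw h0 hd
    have h1 := ih (fun i => d i.castSucc) (fun i => w i.castSucc - w (Fin.last n))
      (fun i j hij => by
        have := hw (Fin.castSucc_le_castSucc_iff.mpr hij)
        simp only; linarith)
      (fun i => by have := hw (Fin.le_last i.castSucc); linarith)
      (fun k => by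
        have := hd k.castSucc
        rw [← Fin.map_castSuccEmb_Iic, Finset.sum_map] at this
        simpa using this)
    have h2 := hd (Fin.last n)
    have h3 : Finset.Iic (Fin.last n) = Finset.univ := by ext i; simp [Fin.le_last]
    rw [h3, Fin.sum_univ_castSucc] at h2
    have h4 := mul_nonneg (h0 (Fin.last n)) h2
    simp only [sub_mul, Finset.sum_sub_distrib, ← Finset.mul_sum] at h1
    rw [Fin.sum_univ_castSucc]
    linarith

lemma araki_sorted {n : ℕ} (u v : Fin n → ℝ) (hu : Antitone u)
    (h : ∀ k : Fin n, ∑ i ∈ Finset.Iic k, u i ≤ ∑ i ∈ Finset.Iic k, v i) :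
    ∑ i, Real.exp (u i) ≤ ∑ i, Real.exp (v i) := by
  have h1 := araki_abel n (fun i => v i - u i) (fun i => Real.exp (u i))
    (fun i j hij => Real.exp_le_exp.mpr (hu hij)) (fun i => (Real.exp_pos _).le)
    (fun k => by rw [Finset.sum_sub_distrib]; linarith [h k])
  rw [← sub_nonneg, ← Finset.sum_sub_distrib]
  refine h1.trans (Finset.sum_le_sum fun i _ => ?_)
  have h2 := Real.add_one_le_exp (v i - u i)
  have h3 : Real.exp (v i) = Real.exp (u i) * Real.exp (v i - u i) := by
    rw [← Real.exp_add]; ring_nf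
  rw [h3]
  nlinarith [Real.exp_pos (u i)]

lemma araki_fin_le {k n : ℕ} (f : Fin k ↪o Fin n) (i : Fin k) : (i : ℕ) ≤ f i := by
  obtain ⟨i, hi⟩ := i
  induction i with
  | zero => simp
  | succ i ih =>
    have h1 := ih (by omega)
    have h2 : f ⟨i, by omega⟩ < f ⟨i+1, hi⟩ := f.strictMono (by simp)
    rw [Fin.lt_def] at h2
    simp only at *
    omega

lemma araki_top {n : ℕ} (v : Fin n → ℝ) (hv : Antitone v) (k : Fin n) (t : Finset (Fin n))
    (ht : t.card = k + 1) : ∑ i ∈ t, v i ≤ ∑ i ∈ Finset.Iic k, v i := by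
  have h1 : (Finset.Iic k).card = k + 1 := by simp
  rw [← Finset.map_orderEmbOfFin_univ t ht, ← Finset.map_orderEmbOfFin_univ _ h1,
    Finset.sum_map, Finset.sum_map]
  refine Finset.sum_le_sum fun i _ => hv ?_
  rw [Fin.le_def]
  have h2 := araki_fin_le (t.orderEmbOfFin ht) i
  refine le_trans (le_of_eq ?_) h2
  have hk : (k : ℕ) + 1 ≤ n := k.2
  have := Finset.orderEmbOfFin_unique h1 (f := fun j => Fin.castLE hk j)
    (fun x => by rw [Finset.mem_Iic, Fin.le_def]; simp; omega)
    (fun a b hab => by simpa using hab)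
  exact (congrArg Fin.val (congrFun this i)).symm

lemma araki_logmaj {n : ℕ} (u v : Fin n → ℝ)
    (h : ∀ s : Finset (Fin n), ∃ t : Finset (Fin n), t.card = s.card ∧
      ∑ i ∈ s, u i ≤ ∑ i ∈ t, v i) :
    ∑ i, Real.exp (u i) ≤ ∑ i, Real.exp (v i) := by
  have hs : ∀ w : Fin n → ℝ, ∃ σ : Equiv.Perm (Fin n), Antitone (w ∘ σ) := fun w =>
    ⟨Tuple.sort (fun i => - w i), fun i j hij => by
      have := Tuple.monotone_sort (fun i => - w i) hij
      simpa using this⟩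
  obtain ⟨σ, hσ⟩ := hs u
  obtain ⟨τ, hτ⟩ := hs v
  rw [← Equiv.sum_comp σ (fun i => Real.exp (u i)), ← Equiv.sum_comp τ (fun i => Real.exp (v i))]
  refine araki_sorted (u ∘ σ) (v ∘ τ) hσ fun k => ?_
  obtain ⟨t, ht, hle⟩ := h ((Finset.Iic k).map σ.toEmbedding)
  rw [Finset.sum_map] at hle
  refine hle.trans ?_
  have := araki_top (v ∘ τ) hτ k (t.map τ.symm.toEmbedding) (by simp [ht])
  rw [Finset.sum_map] at this
  simpa using this
open scoped NNReal
open CFC in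
lemma araki_norm {A : Type*} [CStarAlgebra A] [PartialOrder A] [StarOrderedRing A]
    (a b : A) (hb : IsStrictlyPositive b) (c : ℝ≥0) (r : ℝ) (hr : r ∈ Set.Icc (0:ℝ) 1)
    (h : b ^ ((2:ℝ)⁻¹) * a * b ^ ((2:ℝ)⁻¹) ≤ algebraMap ℝ≥0 A c) :
    b ^ (r / 2) * a ^ r * b ^ (r / 2) ≤ algebraMap ℝ≥0 A (c ^ r) := by
  have hu : IsUnit b := hb.isUnit
  have sa : ∀ y : ℝ, IsSelfAdjoint (b ^ y) := fun y => (rpow_nonneg).isSelfAdjoint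
  have h1 := (sa (-(2:ℝ)⁻¹)).conjugate_le_conjugate h
  have e1 : b ^ (-(2:ℝ)⁻¹) * (b ^ ((2:ℝ)⁻¹) * a * b ^ ((2:ℝ)⁻¹)) * b ^ (-(2:ℝ)⁻¹) = a := by
    calc _ = (b ^ (-(2:ℝ)⁻¹) * b ^ ((2:ℝ)⁻¹)) * a * (b ^ ((2:ℝ)⁻¹) * b ^ (-(2:ℝ)⁻¹)) := by
          simp only [mul_assoc]
      _ = a := by rw [rpow_neg_mul_rpow _ hb, rpow_mul_rpow_neg _ hb]; simp
  have e2 : b ^ (-(2:ℝ)⁻¹) * algebraMap ℝ≥0 A c * b ^ (-(2:ℝ)⁻¹) = c • b ^ (-1 : ℝ) := by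
    rw [Algebra.algebraMap_eq_smul_one, mul_smul_comm, smul_mul_assoc, mul_one, ← rpow_add hu]
    norm_num
  rw [e1, e2] at h1
  have h2 := CFC.rpow_le_rpow hr h1
  have e3 : (c • b ^ (-1 : ℝ)) ^ r = (c ^ r) • b ^ (-r) := by
    have hz : 0 ∉ spectrum ℝ≥0 b := spectrum.zero_notMem _ hu
    have hc : ContinuousOn (fun x : ℝ≥0 => x ^ (-1 : ℝ)) (spectrum ℝ≥0 b) :=
      NNReal.continuousOn_rpow_const (.inl hz)
    have hc' : ContinuousOn (fun x : ℝ≥0 => x ^ (-r : ℝ)) (spectrum ℝ≥0 b) :=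
      NNReal.continuousOn_rpow_const (.inl hz)
    simp only [rpow_def]
    rw [← cfc_smul c _ b hc, ← cfc_smul _ _ b hc', ← cfc_comp' (fun x : ℝ≥0 => x ^ r) (fun x : ℝ≥0 => c • x ^ (-1 : ℝ)) b
      (NNReal.continuousOn_rpow_const (.inr hr.1)) (hc.const_smul c) hb.nonneg]
    refine cfc_congr fun x _ => ?_
    simp [NNReal.mul_rpow, NNReal.rpow_neg, NNReal.inv_rpow]
  rw [e3] at h2
  have h3 := (sa (r/2)).conjugate_le_conjugate h2
  refine h3.trans (le_of_eq ?_)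
  rw [mul_smul_comm, smul_mul_assoc, ← rpow_add hu, ← rpow_add hu, Algebra.algebraMap_eq_smul_one,
    show r/2 + -r + r/2 = 0 by ring, rpow_zero b hb.nonneg]

open Set.powersetCard in
/-- the `k`-th compound matrix -/
noncomputable def arakiC {n : ℕ} (k : ℕ) (A : Matrix (Fin n) (Fin n) ℂ) :
    Matrix (Set.powersetCard (Fin n) k) (Set.powersetCard (Fin n) k) ℂ :=
  LinearMap.toMatrix ((Pi.basisFun ℂ (Fin n)).exteriorPower k)
    ((Pi.basisFun ℂ (Fin n)).exteriorPower k) (exteriorPower.map k (Matrix.toLin' A))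

lemma arakiC_mul {n : ℕ} (k : ℕ) (A B : Matrix (Fin n) (Fin n) ℂ) :
    arakiC k (A * B) = arakiC k A * arakiC k B := by
  unfold arakiC
  rw [Matrix.toLin'_mul, exteriorPower.map_comp, LinearMap.toMatrix_comp _ ((Pi.basisFun ℂ (Fin n)).exteriorPower k)]

lemma arakiC_one {n : ℕ} (k : ℕ) : arakiC k (1 : Matrix (Fin n) (Fin n) ℂ) = 1 := by
  unfold arakiC
  rw [Matrix.toLin'_one, exteriorPower.map_id, LinearMap.toMatrix_id]

lemma arakiC_apply {n : ℕ} (k : ℕ) (A : Matrix (Fin n) (Fin n) ℂ) (s t) :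
    arakiC k A s t = (A.submatrix (Set.powersetCard.ofFinEmbEquiv.symm s)
      (Set.powersetCard.ofFinEmbEquiv.symm t)).det := by
  unfold arakiC
  rw [LinearMap.toMatrix_apply, exteriorPower.basis_apply, exteriorPower.basis_repr_apply,
    exteriorPower.map_apply_ιMulti_family, exteriorPower.ιMulti_family,
    exteriorPower.ιMultiDual_apply_ιMulti, ← Matrix.det_transpose]
  congr 1
  ext i j
  simp

lemma arakiC_star {n : ℕ} (k : ℕ) (A : Matrix (Fin n) (Fin n) ℂ) :
    arakiC k (star A) = star (arakiC k A) := by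
  ext s t
  rw [Matrix.star_eq_conjTranspose, Matrix.star_eq_conjTranspose, Matrix.conjTranspose_apply,
    arakiC_apply, arakiC_apply, ← Matrix.det_conjTranspose]
  rfl

lemma arakiC_diagonal {n : ℕ} (k : ℕ) (d : Fin n → ℂ) :
    arakiC k (Matrix.diagonal d) = Matrix.diagonal (fun s => ∏ i ∈ s.1, d i) := by
  ext s t
  unfold arakiC
  rw [LinearMap.toMatrix_apply, exteriorPower.basis_apply, 
    exteriorPower.map_apply_ιMulti_family, exteriorPower.ιMulti_family]
  have h1 : ((⇑(Matrix.toLin' (Matrix.diagonal d)) ∘ ⇑(Pi.basisFun ℂ (Fin n))) ∘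
      ⇑(Set.powersetCard.ofFinEmbEquiv.symm t)) = fun i =>
      (d (Set.powersetCard.ofFinEmbEquiv.symm t i)) • 
        ((Pi.basisFun ℂ (Fin n)) ∘ (Set.powersetCard.ofFinEmbEquiv.symm t)) i := by
    ext i j
    simp only [Function.comp_apply, Pi.basisFun_apply, Matrix.toLin'_apply, Matrix.mulVec_diagonal,
      Pi.single_apply, Pi.smul_apply, smul_eq_mul]
    split_ifs with h
    · rw [h]
    · simp
  rw [h1, AlternatingMap.map_smul_univ]
  have h2 : ∏ i, d (Set.powersetCard.ofFinEmbEquiv.symm t i) = ∏ i ∈ t.1, d i := by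
    conv_rhs => rw [← Finset.map_orderEmbOfFin_univ t.1 t.2, Finset.prod_map]
    rfl
  have h3 := exteriorPower.basis_repr ℂ k (Pi.basisFun ℂ (Fin n)) t
  rw [exteriorPower.ιMulti_family] at h3
  rw [map_smul, h3, h2, Matrix.diagonal_apply]
  by_cases h : s = t <;> simp [h]

open Matrix in
lemma araki_cfc_conj {ι : Type*} [Fintype ι] [DecidableEq ι] (U : Matrix ι ι ℂ)
    (hU : U ∈ unitary (Matrix ι ι ℂ)) (d : ι → ℝ) (f : ℝ → ℝ) :
    cfc f (U * diagonal (fun i => (d i : ℂ)) * star U) =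
      U * diagonal (fun i => (f (d i) : ℂ)) * star U := by
  have hsa : IsSelfAdjoint (U * diagonal (fun i => (d i : ℂ)) * star U) := by
    refine IsSelfAdjoint.conjugate ?_ U
    rw [isSelfAdjoint_iff, star_eq_conjTranspose, diagonal_conjTranspose]
    congr 1
    ext i
    simp
  have hfin := finite_real_spectrum (A := U * diagonal (fun i => (d i : ℂ)) * star U)
  set S : Finset ℝ := hfin.toFinset ∪ Finset.univ.image d with hS
  set q := Lagrange.interpolate S id f with hq
  have hqe : ∀ x ∈ S, q.eval x = f x := fun x hx =>
    Lagrange.eval_interpolate_at_node f (Set.injOn_id _) hx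
  have h1 : cfc f (U * diagonal (fun i => (d i : ℂ)) * star U) =
      cfc q.eval (U * diagonal (fun i => (d i : ℂ)) * star U) :=
    cfc_congr fun x hx => (hqe x (by simp [hS, hx])).symm
  rw [h1, cfc_polynomial q _ hsa]
  let φ : (ι → ℂ) →ₐ[ℝ] Matrix ι ι ℂ :=
    (((Unitary.conjStarAlgAut ℂ _ (⟨U, hU⟩ : unitary (Matrix ι ι ℂ))).toAlgEquiv.toAlgHom).restrictScalars
      ℝ).comp (diagonalAlgHom ℝ)
  have hφ : ∀ e, φ e = U * diagonal e * star U := fun e => rfl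
  rw [← hφ, ← hφ, Polynomial.aeval_algHom_apply]
  congr 1
  ext i
  have h2 := Polynomial.aeval_algHom_apply (Pi.evalAlgHom ℝ (fun _ : ι => ℂ) i) (fun i => (d i : ℂ)) q
  have h3 : Polynomial.aeval ((d i : ℝ) : ℂ) q = ((q.eval (d i) : ℝ) : ℂ) :=
    Polynomial.aeval_algebraMap_apply_eq_algebraMap_eval (d i) q
  rw [hqe (d i) (by simp [hS])] at h3
  rw [← h3]
  exact h2.symm

open Matrix ComplexOrder in
lemma araki_spectral {ι : Type*} [Fintype ι] [DecidableEq ι] {A : Matrix ι ι ℂ}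
    (hA : A.IsHermitian) : A = (hA.eigenvectorUnitary : Matrix ι ι ℂ) *
      diagonal (fun i => (hA.eigenvalues i : ℂ)) * star (hA.eigenvectorUnitary : Matrix ι ι ℂ) :=
  hA.spectral_theorem

open Matrix ComplexOrder in
lemma araki_trace {ι : Type*} [Fintype ι] [DecidableEq ι] {A : Matrix ι ι ℂ}
    (hA : A.IsHermitian) (f : ℝ → ℝ) :
    trace (cfc f A) = ((∑ i, f (hA.eigenvalues i) : ℝ) : ℂ) := by
  have h := araki_cfc_conj _ hA.eigenvectorUnitary.2 hA.eigenvalues f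
  rw [← araki_spectral hA] at h
  rw [h, Matrix.trace_mul_comm, ← mul_assoc, Unitary.coe_star_mul_self, one_mul]
  simp [Matrix.trace]

lemma arakiC_unitary {n : ℕ} (k : ℕ) (U : Matrix (Fin n) (Fin n) ℂ)
    (hU : U ∈ unitary (Matrix (Fin n) (Fin n) ℂ)) :
    arakiC k U ∈ unitary (Matrix (Set.powersetCard (Fin n) k) (Set.powersetCard (Fin n) k) ℂ) := by
  rw [Unitary.mem_iff] at hU ⊢
  rw [← arakiC_star, ← arakiC_mul, ← arakiC_mul, hU.1, hU.2, arakiC_one]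
  exact ⟨rfl, rfl⟩

open Matrix in
lemma arakiC_conj {n : ℕ} (k : ℕ) (U : Matrix (Fin n) (Fin n) ℂ) (d : Fin n → ℝ) :
    arakiC k (U * diagonal (fun i => (d i : ℂ)) * star U) =
      arakiC k U * diagonal (fun s => ((∏ i ∈ s.1, d i : ℝ) : ℂ)) * star (arakiC k U) := by
  rw [arakiC_mul, arakiC_mul, arakiC_star, arakiC_diagonal]
  simp

open Matrix ComplexOrder in
lemma arakiC_rpow {n : ℕ} (k : ℕ) {A : Matrix (Fin n) (Fin n) ℂ} (hA : A.PosSemidef) (q : ℝ) :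
    arakiC k (cfc (fun x : ℝ => x ^ q) A) = cfc (fun x : ℝ => x ^ q) (arakiC k A) := by
  have h := araki_spectral hA.1
  rw [h, araki_cfc_conj _ hA.1.eigenvectorUnitary.2, arakiC_conj, arakiC_conj,
    araki_cfc_conj _ (arakiC_unitary k _ hA.1.eigenvectorUnitary.2)]
  congr 3
  ext s
  rw [Real.finsetProd_rpow _ _ fun i _ => hA.eigenvalues_nonneg i]

open Matrix ComplexOrder in
lemma araki_conj_posDef {ι : Type*} [Fintype ι] [DecidableEq ι] (U : Matrix ι ι ℂ)
    (hU : U ∈ unitary (Matrix ι ι ℂ)) (d : ι → ℝ) (hd : ∀ i, 0 < d i) :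
    (U * diagonal (fun i => (d i : ℂ)) * star U).PosDef := by
  have h : IsUnit U := 
    ⟨⟨U, star U, (Unitary.mem_iff.mp hU).2, (Unitary.mem_iff.mp hU).1⟩, rfl⟩
  rw [IsUnit.posDef_star_right_conjugate_iff h]
  exact PosDef.diagonal (fun i => by simpa using hd i)

open Matrix ComplexOrder in
lemma arakiC_posDef {n : ℕ} (k : ℕ) {A : Matrix (Fin n) (Fin n) ℂ} (hA : A.PosDef) :
    (arakiC k A).PosDef := by
  have h := araki_spectral hA.1
  rw [h, arakiC_conj]
  exact araki_conj_posDef _ (arakiC_unitary k _ hA.1.eigenvectorUnitary.2) _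
    fun s => Finset.prod_pos fun i _ => hA.eigenvalues_pos i

open Matrix ComplexOrder in
lemma araki_rpow_posDef {ι : Type*} [Fintype ι] [DecidableEq ι] {A : Matrix ι ι ℂ} (hA : A.PosDef)
    (q : ℝ) : (cfc (fun x : ℝ => x ^ q) A).PosDef := by
  have h := araki_spectral hA.1
  rw [h, araki_cfc_conj _ hA.1.eigenvectorUnitary.2]
  exact araki_conj_posDef _ hA.1.eigenvectorUnitary.2 _
    fun i => Real.rpow_pos_of_pos (hA.eigenvalues_pos i) _

open Matrix ComplexOrder MatrixOrder in
lemma araki_conj_le {ι : Type*} [Fintype ι] [DecidableEq ι] (U : Matrix ι ι ℂ)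
    (hU : U ∈ unitary (Matrix ι ι ℂ)) (d : ι → ℝ) (c : ℝ≥0) :
    (U * diagonal (fun i => (d i : ℂ)) * star U) ≤ algebraMap ℝ≥0 (Matrix ι ι ℂ) c ↔
      ∀ i, d i ≤ c := by
  have h : IsUnit U := 
    ⟨⟨U, star U, (Unitary.mem_iff.mp hU).2, (Unitary.mem_iff.mp hU).1⟩, rfl⟩
  have e : algebraMap ℝ≥0 (Matrix ι ι ℂ) c = U * diagonal (fun _ => ((c : ℝ) : ℂ)) * star U := by
    have : diagonal (fun _ : ι => ((c : ℝ) : ℂ)) = ((c : ℝ) : ℂ) • (1 : Matrix ι ι ℂ) := by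
      rw [← diagonal_one, ← diagonal_smul]; congr 1; ext; simp
    rw [this, mul_smul_comm, smul_mul_assoc, mul_one, (Unitary.mem_iff.mp hU).2,
      Algebra.algebraMap_eq_smul_one]
    rfl
  rw [e, Matrix.le_iff, ← sub_mul, ← mul_sub, diagonal_sub,
    IsUnit.posSemidef_star_right_conjugate_iff h, posSemidef_diagonal_iff]
  refine forall_congr' fun i => ?_
  rw [← Complex.ofReal_sub, Complex.zero_le_real, sub_nonneg]

open Matrix ComplexOrder MatrixOrder Matrix.Norms.L2Operator in
lemma araki_norm_matrix {ι : Type*} [Fintype ι] [DecidableEq ι] (a b : Matrix ι ι ℂ)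
    (ha : a.PosDef) (hb : b.PosDef) (c : ℝ≥0) (r : ℝ) (hr : r ∈ Set.Icc (0:ℝ) 1)
    (h : cfc (fun x : ℝ => x ^ ((2:ℝ)⁻¹)) b * a * cfc (fun x : ℝ => x ^ ((2:ℝ)⁻¹)) b ≤
      algebraMap ℝ≥0 _ c) :
    cfc (fun x : ℝ => x ^ (r/2)) b * cfc (fun x : ℝ => x ^ r) a * cfc (fun x : ℝ => x ^ (r/2)) b ≤
      algebraMap ℝ≥0 _ (c ^ r) := by
  have ha0 : 0 ≤ a := Matrix.nonneg_iff_posSemidef.mpr ha.posSemidef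
  have hb0 : 0 ≤ b := Matrix.nonneg_iff_posSemidef.mpr hb.posSemidef
  have := araki_norm a b (Matrix.isStrictlyPositive_iff_posDef.mpr hb) c r hr
  rw [CFC.rpow_eq_cfc_real hb0, CFC.rpow_eq_cfc_real hb0, CFC.rpow_eq_cfc_real ha0] at this
  exact this h

open Matrix ComplexOrder MatrixOrder in
lemma araki_posDef {n : ℕ} (X Y : Matrix (Fin n) (Fin n) ℂ)
    (hX : X.PosDef) (hY : Y.PosDef) (p r : ℝ) (hp : 0 < p) (hr : r ∈ Set.Icc (0 : ℝ) 1) :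
    trace (cfc (fun x : ℝ => x ^ p)
        (cfc (fun x : ℝ => x ^ (r / 2)) Y * cfc (fun x : ℝ => x ^ r) X *
          cfc (fun x : ℝ => x ^ (r / 2)) Y)) ≤
      trace (cfc (fun x : ℝ => x ^ (r * p))
        (cfc (fun x : ℝ => x ^ ((2 : ℝ)⁻¹)) Y * X * cfc (fun x : ℝ => x ^ ((2 : ℝ)⁻¹)) Y)) := by
  have key : ∀ (q : ℝ) {Z : Matrix (Fin n) (Fin n) ℂ}, Z.PosDef →
      (cfc (fun x : ℝ => x ^ q) Y * Z * cfc (fun x : ℝ => x ^ q) Y).PosDef := by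
    intro q Z hZ
    have h1 := araki_rpow_posDef hY q
    have h2 : star (cfc (fun x : ℝ => x ^ q) Y) = cfc (fun x : ℝ => x ^ q) Y := h1.1
    have h3 := (IsUnit.posDef_star_right_conjugate_iff h1.isUnit (x := Z)).mpr hZ
    rwa [h2] at h3
  have hM := key (r/2) (araki_rpow_posDef hX r)
  have hN := key (2⁻¹) hX
  set M := cfc (fun x : ℝ => x ^ (r / 2)) Y * cfc (fun x : ℝ => x ^ r) X *
          cfc (fun x : ℝ => x ^ (r / 2)) Y with hMdef
  set N := cfc (fun x : ℝ => x ^ ((2 : ℝ)⁻¹)) Y * X * cfc (fun x : ℝ => x ^ ((2 : ℝ)⁻¹)) Y with hNdef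
  rw [araki_trace hM.1, araki_trace hN.1, Complex.real_le_real]
  have ea : ∀ i, hM.1.eigenvalues i ^ p = Real.exp (Real.log (hM.1.eigenvalues i) * p) :=
    fun i => Real.rpow_def_of_pos (hM.eigenvalues_pos i) _
  have eb : ∀ i, hN.1.eigenvalues i ^ (r * p) =
      Real.exp (Real.log (hN.1.eigenvalues i) * (r * p)) :=
    fun i => Real.rpow_def_of_pos (hN.eigenvalues_pos i) _
  simp_rw [ea, eb]
  refine araki_logmaj _ _ fun s => ?_
  let s' : Set.powersetCard (Fin n) s.card := ⟨s, rfl⟩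
  have : Nonempty (Set.powersetCard (Fin n) s.card) := ⟨s'⟩
  obtain ⟨t, ht⟩ := Finite.exists_max
    (fun t : Set.powersetCard (Fin n) s.card => ∏ i ∈ t.1, hN.1.eigenvalues i)
  refine ⟨t.1, t.2, ?_⟩
  have hc0 : 0 < ∏ i ∈ t.1, hN.1.eigenvalues i := Finset.prod_pos fun i _ => hN.eigenvalues_pos i
  set c : ℝ≥0 := ⟨∏ i ∈ t.1, hN.1.eigenvalues i, hc0.le⟩ with hc
  have hNle : arakiC s.card N ≤ algebraMap ℝ≥0 _ c := by
    rw [araki_spectral hN.1, arakiC_conj,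
      araki_conj_le _ (arakiC_unitary _ _ hN.1.eigenvectorUnitary.2)]
    exact ht
  rw [hNdef, arakiC_mul, arakiC_mul, arakiC_rpow _ hY.posSemidef] at hNle
  have hMle := araki_norm_matrix _ _ (arakiC_posDef _ hX) (arakiC_posDef _ hY) c r hr hNle
  rw [← arakiC_rpow _ hY.posSemidef, ← arakiC_rpow _ hX.posSemidef, ← arakiC_mul, ← arakiC_mul,
    ← hMdef, araki_spectral hM.1, arakiC_conj,
    araki_conj_le _ (arakiC_unitary _ _ hM.1.eigenvectorUnitary.2)] at hMle
  have h1 : ∏ i ∈ s, hM.1.eigenvalues i ≤ (∏ i ∈ t.1, hN.1.eigenvalues i) ^ r := by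
    have h0 := hMle s'
    rw [NNReal.coe_rpow] at h0
    exact h0
  have h2 := Real.log_le_log (Finset.prod_pos fun i _ => hM.eigenvalues_pos i) h1
  rw [Real.log_rpow hc0, Real.log_prod fun i _ => (hM.eigenvalues_pos i).ne',
    Real.log_prod fun i _ => (hN.eigenvalues_pos i).ne'] at h2
  rw [← Finset.sum_mul, ← Finset.sum_mul]
  nlinarith

open Matrix ComplexOrder Filter Topology Matrix.Norms.L2Operator in
lemma araki_tendsto {ι : Type*} [Fintype ι] [DecidableEq ι] (M : ℝ → Matrix ι ι ℂ)
    (M₀ : Matrix ι ι ℂ) (h0 : M₀.PosSemidef) (hM : ∀ᶠ e in 𝓝[>] (0:ℝ), (M e).PosSemidef)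
    (ht : Tendsto M (𝓝[>] (0:ℝ)) (𝓝 M₀)) (q : ℝ) (hq : 0 ≤ q) :
    Tendsto (fun e => cfc (fun x : ℝ => x ^ q) (M e)) (𝓝[>] (0:ℝ))
      (𝓝 (cfc (fun x : ℝ => x ^ q) M₀)) := by
  have hspec : ∀ A : Matrix ι ι ℂ, A.PosSemidef → ‖A‖ ≤ ‖M₀‖ + 1 →
      spectrum ℝ A ⊆ Set.Icc 0 ((‖M₀‖ + 1) * ‖(1 : Matrix ι ι ℂ)‖) := by
    intro A hA hn x hx
    refine ⟨?_, ?_⟩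
    · rw [hA.1.spectrum_real_eq_range_eigenvalues] at hx
      obtain ⟨i, rfl⟩ := hx
      exact hA.eigenvalues_nonneg i
    · have := spectrum.norm_le_norm_mul_of_mem hx
      exact (Real.le_norm_self x).trans (this.trans (by gcongr))
  refine ht.cfc (isCompact_Icc (a := (0:ℝ)) (b := (‖M₀‖ + 1) * ‖(1 : Matrix ι ι ℂ)‖)) _ ?_ ?_
    (hspec _ h0 (by linarith)) h0.1 ?_
  · have hn : ∀ᶠ e in 𝓝[>] (0:ℝ), ‖M e‖ < ‖M₀‖ + 1 :=
      ht.norm.eventually_lt_const (by linarith)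
    filter_upwards [hM, hn] with e h1 h2 using hspec _ h1 h2.le
  · filter_upwards [hM] with e h1 using h1.1
  · exact (Real.continuous_rpow_const hq).continuousOn

open Matrix ComplexOrder in
lemma araki_rpow_posSemidef {ι : Type*} [Fintype ι] [DecidableEq ι] {A : Matrix ι ι ℂ}
    (hA : A.PosSemidef) (q : ℝ) : (cfc (fun x : ℝ => x ^ q) A).PosSemidef := by
  have h := araki_spectral hA.1
  rw [h, araki_cfc_conj _ hA.1.eigenvectorUnitary.2]
  refine PosSemidef.mul_mul_conjTranspose_same ?_ _
  rw [posSemidef_diagonal_iff]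
  intro i
  rw [Complex.zero_le_real]
  exact Real.rpow_nonneg (hA.eigenvalues_nonneg i) _

open Matrix ComplexOrder in
lemma araki_sandwich {ι : Type*} [Fintype ι] [DecidableEq ι] {Y Z : Matrix ι ι ℂ}
    (hY : Y.PosSemidef) (hZ : Z.PosSemidef) (q : ℝ) :
    (cfc (fun x : ℝ => x ^ q) Y * Z * cfc (fun x : ℝ => x ^ q) Y).PosSemidef := by
  have h1 := (araki_rpow_posSemidef hY q).1
  have h2 := hZ.mul_mul_conjTranspose_same (cfc (fun x : ℝ => x ^ q) Y)
  rwa [h1.eq] at h2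

open Matrix ComplexOrder Filter Topology in
lemma araki_cfc {n : ℕ} (X Y : Matrix (Fin n) (Fin n) ℂ)
    (hX : X.PosSemidef) (hY : Y.PosSemidef) (p r : ℝ) (hp : 0 < p) (hr : r ∈ Set.Icc (0 : ℝ) 1) :
    trace (cfc (fun x : ℝ => x ^ p)
        (cfc (fun x : ℝ => x ^ (r / 2)) Y * cfc (fun x : ℝ => x ^ r) X *
          cfc (fun x : ℝ => x ^ (r / 2)) Y)) ≤
      trace (cfc (fun x : ℝ => x ^ (r * p))
        (cfc (fun x : ℝ => x ^ ((2 : ℝ)⁻¹)) Y * X * cfc (fun x : ℝ => x ^ ((2 : ℝ)⁻¹)) Y)) := by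
  have hpd : ∀ Z : Matrix (Fin n) (Fin n) ℂ, Z.PosSemidef → ∀ e : ℝ, 0 < e →
      (Z + (e : ℂ) • (1 : Matrix (Fin n) (Fin n) ℂ)).PosDef := fun Z hZ e he =>
    PosDef.posSemidef_add hZ (PosDef.one.smul (by simpa using he))
  have hpos : ∀ᶠ e in 𝓝[>] (0:ℝ), 0 < e := self_mem_nhdsWithin
  have htend : ∀ Z : Matrix (Fin n) (Fin n) ℂ,
      Tendsto (fun e : ℝ => Z + (e : ℂ) • (1 : Matrix (Fin n) (Fin n) ℂ)) (𝓝[>] (0:ℝ)) (𝓝 Z) := by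
    intro Z
    have : Continuous (fun e : ℝ => Z + (e : ℂ) • (1 : Matrix (Fin n) (Fin n) ℂ)) := by fun_prop
    have h := this.tendsto 0
    simp only [Complex.ofReal_zero, zero_smul, add_zero] at h
    exact h.mono_left nhdsWithin_le_nhds
  have hcf : ∀ Z : Matrix (Fin n) (Fin n) ℂ, Z.PosSemidef → ∀ q : ℝ, 0 ≤ q →
      Tendsto (fun e : ℝ => cfc (fun x : ℝ => x ^ q) (Z + (e : ℂ) • (1 : Matrix (Fin n) (Fin n) ℂ)))
        (𝓝[>] (0:ℝ)) (𝓝 (cfc (fun x : ℝ => x ^ q) Z)) := fun Z hZ q hq =>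
    araki_tendsto _ Z hZ (hpos.mono fun e he => (hpd Z hZ e he).posSemidef) (htend Z) q hq
  have hr2 : 0 ≤ r / 2 := by linarith [hr.1]
  have hL := araki_tendsto _ _ (araki_sandwich hY (araki_rpow_posSemidef hX r) (r/2))
    (hpos.mono fun e he => araki_sandwich (hpd Y hY e he).posSemidef
      (araki_rpow_posSemidef (hpd X hX e he).posSemidef r) (r/2))
    (((hcf Y hY (r/2) hr2).mul (hcf X hX r hr.1)).mul (hcf Y hY (r/2) hr2)) p hp.le
  have hR := araki_tendsto _ _ (araki_sandwich hY hX (2⁻¹))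
    (hpos.mono fun e he => araki_sandwich (hpd Y hY e he).posSemidef
      (hpd X hX e he).posSemidef (2⁻¹))
    (((hcf Y hY (2⁻¹) (by norm_num)).mul (htend X)).mul (hcf Y hY (2⁻¹) (by norm_num)))
    (r * p) (mul_nonneg hr.1 hp.le)
  have htr : Continuous (fun Z : Matrix (Fin n) (Fin n) ℂ => trace Z) := by fun_prop
  exact le_of_tendsto_of_tendsto ((htr.tendsto _).comp hL) ((htr.tendsto _).comp hR)
    (hpos.mono fun e he => araki_posDef _ _ (hpd X hX e he) (hpd Y hY e he) p r hp hr)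

open Matrix ComplexOrder in
theorem araki_inequality {n : ℕ} (X Y : Matrix (Fin n) (Fin n) ℂ)
    (hX : X.PosSemidef) (hY : Y.PosSemidef) (p r : ℝ) (hp : 0 < p) (hr : r ∈ Set.Icc (0 : ℝ) 1) :
    trace (cfc (fun x : ℝ => x ^ p)
        (hY.1.cfc (fun x : ℝ => x ^ (r / 2)) * hX.1.cfc (fun x : ℝ => x ^ r) *
          hY.1.cfc (fun x : ℝ => x ^ (r / 2)))) ≤
      trace (cfc (fun x : ℝ => x ^ (r * p))
        (hY.1.cfc (fun x : ℝ => x ^ ((2 : ℝ)⁻¹)) * X *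
          hY.1.cfc (fun x : ℝ => x ^ ((2 : ℝ)⁻¹)))) := by
  simp only [← Matrix.IsHermitian.cfc_eq]
  exact araki_cfc X Y hX hY p r hp hr
end
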